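/- Let h ≥ 1 and let x_1, …, x_h be real numbers with 0 < x_i < 1 for all i. Then Σ over all pyramids P of height h of x_1^{|P_0|} x_2^{|P_1|} ⋯ x_h^{|P_{h−1}|} equals Σ_{n_1 ≥ n_2 ≥ … ≥ n_h ≥ 1} (n_1 − n_2 + 1) ⋯ (n_{h−1} − n_h + 1) · (x_1^{n_1} ⋯ x_h^{n_h}) / ((1 − x_1^{n_1})^2 (1 − x_1^{n_1} x_2^{n_2})^2 ⋯ (1 − x_1^{n_1} ⋯ x_{h−1}^{n_{h−1}})^2 (1 − x_1^{n_1} ⋯ x_h^{n_h})), both sums converging. -/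

import Mathlib

/-!
The slices of a pyramid are boxes `I_a × J_a`, and the pyramid condition says exactly that the
intervals `I_a` and, independently, the intervals `J_a` form nested chains whose outermost interval
has left endpoint `0` (`boxes_bijective`). A chain with lengths `n_1 ≥ ⋯ ≥ n_h` is given by the successive shifts of the
left endpoints, the `i`-th of which takes `n_i - n_{i+1} + 1` values, so there are `pyrWeight h n`
such chains (`tsum_chain`). The left-hand side is therefore
`∑_n ∑_m w(n) w(m) ∏ i, (x_i ^ n_i) ^ m_i`.

For fixed `n` the sum over `m` is the weighted generating function of weakly decreasing tuples at
`X_i = x_i ^ n_i`. In the variables `k_i = m_i - m_{i+1}`, `k_h = m_h - 1` it factors as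
`(∏ X_i) * ∏ i, ∑_k (k + 1) (X_1 ⋯ X_i) ^ k`, without the factor `k + 1` for `i = h`, and this is
the product appearing on the right-hand side (`tsum_weight`).

All of this is carried out in `ℝ≥0∞`. Finiteness comes from `tsum_weight` again: replacing the
exponents `n_j` by `1` in the denominators bounds the right-hand side by a constant times the
weighted generating function at `x` (`tsum_rhs_ne_top`).
-/


/-- The `a`-th horizontal slice of a finite set of cells in `ℕ × ℤ × ℤ`. -/
def polySlice (P : Finset (ℕ × ℤ × ℤ)) (a : ℕ) : Finset (ℤ × ℤ) :=
  (P.filter fun q => q.1 = a).image fun q => q.2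

/-- A plateau: the product of two nonempty finite integer intervals. -/
def IsPlateau (S : Finset (ℤ × ℤ)) : Prop :=
  ∃ a b c d : ℤ, a ≤ b ∧ c ≤ d ∧ S = Finset.Icc a b ×ˢ Finset.Icc c d

/-- A pyramid of height `h`. -/
def IsPyramid (h : ℕ) (P : Finset (ℕ × ℤ × ℤ)) : Prop :=
  (∀ a : ℕ, (polySlice P a).Nonempty ↔ a < h) ∧
  (∀ a : ℕ, a < h → IsPlateau (polySlice P a)) ∧
  (∀ (a : ℕ) (b c : ℤ), (a + 1, b, c) ∈ P → (a, b, c) ∈ P) ∧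
  (∀ b c : ℤ, ((0 : ℕ), b, c) ∈ P → 0 ≤ b ∧ 0 ≤ c) ∧
  ((0 : ℕ), (0 : ℤ), (0 : ℤ)) ∈ P

/-- An espalier of height `h`: a pyramid all of whose plateaus contain `(0,0)`. -/
def IsEspalier (h : ℕ) (P : Finset (ℕ × ℤ × ℤ)) : Prop :=
  IsPyramid h P ∧ ∀ a : ℕ, a < h → (a, (0 : ℤ), (0 : ℤ)) ∈ P

/-- The weight `(n_1 - n_2 + 1) ⋯ (n_{h-1} - n_h + 1)` of a tuple of positive integers
(an empty product, equal to `1`, when `h = 1`). -/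
def pyrWeight (h : ℕ) (n : Fin h → ℕ+) : ℕ :=
  ∏ i : Fin h,
    if hi : (i : ℕ) + 1 < h then (n i : ℕ) - (n ⟨(i : ℕ) + 1, hi⟩ : ℕ) + 1 else 1

open scoped ENNReal

/-! ### Series in `ℝ≥0∞` -/

lemma tsum_pi_prod (h : ℕ) (f : Fin h → ℕ → ℝ≥0∞) :
    ∑' k : Fin h → ℕ, ∏ i, f i (k i) = ∏ i, ∑' k, f i k := by
  induction h with
  | zero => simp [tsum_fintype]
  | succ h ih =>
    rw [← (Fin.consEquiv (fun _ => ℕ)).tsum_eq, ENNReal.tsum_prod', Fin.prod_univ_succ,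
      ← ih (fun i => f i.succ), ← ENNReal.tsum_mul_right]
    refine tsum_congr fun a => ?_
    rw [← ENNReal.tsum_mul_left]
    refine tsum_congr fun k => ?_
    simp [Fin.consEquiv, Fin.prod_univ_succ]

lemma tsum_succ_mul_geometric (r : ℝ≥0∞) :
    ∑' k : ℕ, ((k + 1 : ℕ) : ℝ≥0∞) * r ^ k = ((1 - r) ^ 2)⁻¹ := by
  have h1 : (∑' p : ℕ × ℕ, r ^ p.1 * r ^ p.2) = ((1 - r) ^ 2)⁻¹ := by
    rw [ENNReal.tsum_prod', ENNReal.inv_pow, sq, ← ENNReal.tsum_geometric,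
      ← ENNReal.tsum_mul_right]
    exact tsum_congr fun a => by simp only [ENNReal.tsum_mul_left]
  rw [← h1, ← Finset.HasAntidiagonal.sigmaAntidiagonalEquivProd.tsum_eq, ENNReal.tsum_sigma']
  refine tsum_congr fun k => ?_
  have : ∀ b : Finset.HasAntidiagonal.antidiagonal k, r ^ b.1.1 * r ^ b.1.2 = r ^ k := fun b => by
    rw [← pow_add, Finset.HasAntidiagonal.mem_antidiagonal.1 b.2]
  simp [Finset.HasAntidiagonal.sigmaAntidiagonalEquivProd, this, tsum_fintype]

/-! ### Weakly decreasing tuples -/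

/-- The `i`-th factor of `pyrWeight`: the number of positions of an interval of length `n_{i+1}`
inside one of length `n_i`, and `1` for the last index. -/
def gap (h : ℕ) (n : Fin h → ℕ+) (i : Fin h) : ℕ :=
  if hi : (i : ℕ) + 1 < h then (n i : ℕ) - (n ⟨(i : ℕ) + 1, hi⟩ : ℕ) + 1 else 1

lemma pyrWeight_eq (h : ℕ) (n : Fin h → ℕ+) : pyrWeight h n = ∏ i, gap h n i := rfl

lemma antitone_of_step {α : Type*} [Preorder α] {h : ℕ} {f : Fin h → α}
    (hf : ∀ (i : Fin h) (hi : (i : ℕ) + 1 < h), f ⟨i + 1, hi⟩ ≤ f i) : Antitone f := by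
  have key : ∀ (i : Fin h) (j : ℕ), (i : ℕ) ≤ j → ∀ hj : j < h, f ⟨j, hj⟩ ≤ f i := by
    intro i j hij
    induction j, hij using Nat.le_induction with
    | base => intro hj; exact le_rfl
    | succ j hij ih => intro hj; exact (hf ⟨j, by omega⟩ hj).trans (ih (by omega))
  intro i j hij
  exact key i j hij j.2

lemma sum_Ici_step {h : ℕ} (k : Fin h → ℕ) (i : Fin h) :
    ∑ j ∈ Finset.Ici i, k j =
      k i + if hi : (i : ℕ) + 1 < h then ∑ j ∈ Finset.Ici (⟨i + 1, hi⟩ : Fin h), k j else 0 := by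
  split_ifs with hi
  · have : Finset.Ici i = insert i (Finset.Ici (⟨i + 1, hi⟩ : Fin h)) := by
      ext j; simp only [Finset.mem_Ici, Finset.mem_insert, Fin.le_def, Fin.ext_iff]; omega
    rw [this, Finset.sum_insert (by simp [Fin.le_def])]
  · have : Finset.Ici i = {i} := by
      ext j; simp only [Finset.mem_Ici, Finset.mem_singleton, Fin.le_def, Fin.ext_iff]; omega
    simp [this]

lemma sum_Iio_step {h : ℕ} (k : Fin h → ℕ) (i : Fin h) (hi : (i : ℕ) + 1 < h) :
    ∑ j ∈ Finset.Iio (⟨i + 1, hi⟩ : Fin h), k j = ∑ j ∈ Finset.Iio i, k j + k i := by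
  have : Finset.Iio (⟨i + 1, hi⟩ : Fin h) = insert i (Finset.Iio i) := by
    ext j; simp only [Finset.mem_Iio, Finset.mem_insert, Fin.lt_def, Fin.ext_iff]; omega
  rw [this, Finset.sum_insert (by simp), add_comm]

/-- The weakly decreasing tuple of positive integers whose successive differences are `k`, the
last entry being `k_{h-1} + 1`. -/
def ofDiff (h : ℕ) (k : Fin h → ℕ) : {n : Fin h → ℕ+ // Antitone n} :=
  ⟨fun i => (∑ j ∈ Finset.Ici i, k j).succPNat, fun i j hij => by
    rw [← PNat.coe_le_coe, Nat.succPNat_coe, Nat.succPNat_coe]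
    exact Nat.succ_le_succ (Finset.sum_le_sum_of_subset (Finset.Ici_subset_Ici.2 hij))⟩

lemma ofDiff_coe (h : ℕ) (k : Fin h → ℕ) (i : Fin h) :
    ((ofDiff h k).1 i : ℕ) = 1 + ∑ j ∈ Finset.Ici i, k j := by
  simp [ofDiff, add_comm]

lemma ofDiff_bijective (h : ℕ) : Function.Bijective (ofDiff h) := by
  constructor
  · intro k l hkl
    have hs : ∀ i, ∑ j ∈ Finset.Ici i, k j = ∑ j ∈ Finset.Ici i, l j := fun i => by
      have := congrArg (fun n => ((n.1 i : ℕ+) : ℕ)) hkl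
      simp only [ofDiff_coe] at this
      omega
    funext i
    have h1 := hs i
    rw [sum_Ici_step, sum_Ici_step l] at h1
    split_ifs at h1 with hi
    · have := hs ⟨i + 1, hi⟩
      omega
    · omega
  · rintro ⟨n, hn⟩
    set k : Fin h → ℕ := fun i =>
      if hi : (i : ℕ) + 1 < h then (n i : ℕ) - (n ⟨i + 1, hi⟩ : ℕ) else (n i : ℕ) - 1 with hk
    have key : ∀ (t : ℕ) (i : Fin h), h - i = t → 1 + ∑ j ∈ Finset.Ici i, k j = (n i : ℕ) := by
      intro t
      induction t with
      | zero => intro i hi; have := i.2; omega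
      | succ t ih =>
        intro i hit
        rw [sum_Ici_step]
        have := (n i).pos
        by_cases hi : (i : ℕ) + 1 < h
        · have h1 := ih ⟨i + 1, hi⟩ (by simp; omega)
          have h2 : (n ⟨i + 1, hi⟩ : ℕ) ≤ n i :=
            PNat.coe_le_coe _ _ |>.2 (hn (by simp [Fin.le_def]))
          have h3 : k i = (n i : ℕ) - (n ⟨i + 1, hi⟩ : ℕ) := by simp [hk, hi]
          rw [dif_pos hi, h3]
          omega
        · have h3 : k i = (n i : ℕ) - 1 := by simp [hk, hi]
          rw [dif_neg hi, h3]
          omega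
    refine ⟨k, Subtype.ext (funext fun i => PNat.eq ?_)⟩
    rw [ofDiff_coe]
    exact key _ i rfl

lemma gap_ofDiff (h : ℕ) (k : Fin h → ℕ) (i : Fin h) :
    gap h (ofDiff h k).1 i = if (i : ℕ) + 1 < h then k i + 1 else 1 := by
  unfold gap
  split_ifs with hi
  · rw [ofDiff_coe, ofDiff_coe, sum_Ici_step, dif_pos hi]
    omega
  · rfl

/-- The generating function of weakly decreasing tuples weighted by `pyrWeight`. Passing to the
successive differences of the tuple factors the sum into `h` geometric-type series. -/
lemma tsum_weight (h : ℕ) (X : Fin h → ℝ≥0∞) :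
    ∑' n : {n : Fin h → ℕ+ // Antitone n}, (pyrWeight h n.1 : ℝ≥0∞) * ∏ i, X i ^ (n.1 i : ℕ) =
      (∏ i, X i) *
        ∏ i : Fin h, ((1 - ∏ j ∈ Finset.Iic i, X j) ^ (if (i : ℕ) + 1 < h then 2 else 1))⁻¹ := by
  rw [← (Equiv.ofBijective _ (ofDiff_bijective h)).tsum_eq]
  have hprod : ∀ k : Fin h → ℕ, ∏ i, X i ^ ((ofDiff h k).1 i : ℕ) =
      (∏ i, X i) * ∏ i, (∏ j ∈ Finset.Iic i, X j) ^ k i := by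
    intro k
    simp only [ofDiff_coe, pow_add, pow_one, Finset.prod_mul_distrib, ← Finset.prod_pow_eq_pow_sum,
      ← Finset.prod_pow]
    congr 1
    exact Finset.prod_comm' (by simp)
  have hterm : ∀ k : Fin h → ℕ,
      (pyrWeight h (ofDiff h k).1 : ℝ≥0∞) * ∏ i, X i ^ ((ofDiff h k).1 i : ℕ) =
      (∏ i, X i) * ∏ i : Fin h, (((if (i : ℕ) + 1 < h then k i + 1 else 1 : ℕ) : ℝ≥0∞) *
        (∏ j ∈ Finset.Iic i, X j) ^ k i) := by
    intro k
    rw [hprod, pyrWeight_eq, Finset.prod_mul_distrib, Nat.cast_prod]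
    simp only [gap_ofDiff]
    ring
  simp only [Equiv.ofBijective_apply, hterm]
  rw [ENNReal.tsum_mul_left, tsum_pi_prod h (fun i a =>
    ((if (i : ℕ) + 1 < h then a + 1 else 1 : ℕ) : ℝ≥0∞) * (∏ j ∈ Finset.Iic i, X j) ^ a)]
  congr 1
  refine Finset.prod_congr rfl fun i _ => ?_
  split_ifs with hi
  · exact tsum_succ_mul_geometric _
  · simp [ENNReal.tsum_geometric]

/-! ### Chains of intervals -/

/-- Nested nonempty integer intervals `[a_0, b_0] ⊇ ⋯ ⊇ [a_{h-1}, b_{h-1}]` with `a_0 = 0`,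
encoded by the pair of their endpoint functions. -/
def IChain (h : ℕ) : Type :=
  {c : (Fin h → ℤ) × (Fin h → ℤ) //
    (∀ i, c.1 i ≤ c.2 i) ∧ Monotone c.1 ∧ Antitone c.2 ∧ ∀ i : Fin h, (i : ℕ) = 0 → c.1 i = 0}

/-- The chain with interval lengths `n` in which the left endpoint of the `(i+1)`-st interval is
`d_i` to the right of that of the `i`-th. The entry of `d` at the last index is necessarily `0` and
carries no information. -/
def toChain (h : ℕ) (s : Σ n : {n : Fin h → ℕ+ // Antitone n}, ∀ i, Fin (gap h n.1 i)) :
    IChain h :=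
  ⟨(fun i => ((∑ j ∈ Finset.Iio i, (s.2 j : ℕ) : ℕ) : ℤ),
    fun i => ((∑ j ∈ Finset.Iio i, (s.2 j : ℕ) : ℕ) : ℤ) + (s.1.1 i : ℕ) - 1), by
    obtain ⟨⟨n, hn⟩, d⟩ := s
    refine ⟨fun i => ?_, fun i j hij => ?_, antitone_of_step fun i hi => ?_, fun i hi => ?_⟩
    · have := (n i).pos
      dsimp only
      omega
    · exact Int.ofNat_le.2 (Finset.sum_le_sum_of_subset (Finset.Iio_subset_Iio hij))
    · have h1 := (d i).2
      have h2 : (n ⟨i + 1, hi⟩ : ℕ) ≤ n i :=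
        PNat.coe_le_coe _ _ |>.2 (hn (by simp [Fin.le_def]))
      have h3 : gap h n i = (n i : ℕ) - (n ⟨i + 1, hi⟩ : ℕ) + 1 := by simp [gap, hi]
      replace h1 := h1.trans_eq h3
      dsimp only
      rw [sum_Iio_step (fun j => (d j : ℕ)) i hi]
      push_cast
      omega
    · have : Finset.Iio i = ∅ := by
        ext j; simp [Fin.le_def, hi]
      simp [this]⟩

lemma toChain_bijective (h : ℕ) : Function.Bijective (toChain h) := by
  constructor
  · rintro ⟨⟨n, hn⟩, d⟩ ⟨⟨m, hm⟩, e⟩ hde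
    have ha : ∀ i, ∑ j ∈ Finset.Iio i, (d j : ℕ) = ∑ j ∈ Finset.Iio i, (e j : ℕ) := fun i => by
      have := congrArg (fun c => c.1.1 i) hde
      simpa only [toChain, Nat.cast_inj] using this
    have hb : ∀ i, n i = m i := fun i => by
      have h1 := congrArg (fun c => c.1.2 i) hde
      simp only [toChain, ha] at h1
      exact PNat.eq (by omega)
    obtain rfl : n = m := funext hb
    congr 1
    funext i
    apply Fin.ext
    by_cases hi : (i : ℕ) + 1 < h
    · have h1 := ha ⟨i + 1, hi⟩
      rw [sum_Iio_step (fun j => (d j : ℕ)) i hi, sum_Iio_step (fun j => (e j : ℕ)) i hi] at h1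
      have := ha i
      omega
    · have h3 : gap h n i = 1 := by simp [gap, hi]
      have h1 := (d i).2
      have h2 := (e i).2
      simp only [h3] at h1 h2
      omega
  · rintro ⟨⟨a, b⟩, hab, hma, hmb, h0⟩
    dsimp only at hab hma hmb h0
    have hn : Antitone fun i => (b i - a i).toNat.succPNat := fun i j hij => by
      have := hma hij
      have := hmb hij
      rw [← PNat.coe_le_coe, Nat.succPNat_coe, Nat.succPNat_coe]
      omega
    set k : Fin h → ℕ := fun i =>
      if hi : (i : ℕ) + 1 < h then (a ⟨i + 1, hi⟩ - a i).toNat else 0 with hk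
    have hlt : ∀ i, k i < gap h (fun i => (b i - a i).toNat.succPNat) i := fun i => by
      by_cases hi : (i : ℕ) + 1 < h
      · have hle : i ≤ ⟨i + 1, hi⟩ := by simp [Fin.le_def]
        have := hma hle
        have := hmb hle
        have := hab i
        have := hab ⟨i + 1, hi⟩
        simp only [hk, gap, hi, dif_pos, Nat.succPNat_coe]
        omega
      · simp [hk, gap, hi]
    have hsum : ∀ (t : ℕ) (ht : t < h),
        ((∑ j ∈ Finset.Iio (⟨t, ht⟩ : Fin h), k j : ℕ) : ℤ) = a ⟨t, ht⟩ := by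
      intro t
      induction t with
      | zero =>
        intro ht
        have : Finset.Iio (⟨0, ht⟩ : Fin h) = ∅ := by
          ext j; simp [Fin.le_def]
        simp [this, h0]
      | succ t ih =>
        intro ht
        have h1 := ih (by omega)
        have h2 := sum_Iio_step k ⟨t, by omega⟩ ht
        have h3 : k ⟨t, by omega⟩ = (a ⟨t + 1, ht⟩ - a ⟨t, by omega⟩).toNat := by simp [hk, ht]
        have h4 : a ⟨t, by omega⟩ ≤ a ⟨t + 1, ht⟩ := hma (by simp [Fin.le_def])
        dsimp only at h2
        rw [h2, h3]
        push_cast at h1 ⊢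
        omega
    refine ⟨⟨⟨_, hn⟩, fun i => ⟨k i, hlt i⟩⟩, Subtype.ext (Prod.ext ?_ ?_)⟩
    · funext i
      exact hsum i i.2
    · funext i
      have h1 := hsum i i.2
      have := hab i
      simp only [toChain, Nat.succPNat_coe]
      simp only [Fin.eta] at h1
      rw [h1]
      omega

/-- The interval lengths of a chain. -/
def chainLen {h : ℕ} (c : IChain h) (i : Fin h) : ℕ := (c.1.2 i + 1 - c.1.1 i).toNat

lemma chainLen_toChain (h : ℕ)
    (s : Σ n : {n : Fin h → ℕ+ // Antitone n}, ∀ i, Fin (gap h n.1 i)) :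
    chainLen (toChain h s) = fun i => (s.1.1 i : ℕ) := by
  funext i
  simp only [chainLen, toChain]
  omega

/-- There are `pyrWeight h n` chains with interval lengths `n`. -/
lemma tsum_chain (h : ℕ) (F : (Fin h → ℕ) → ℝ≥0∞) :
    ∑' c : IChain h, F (chainLen c) =
      ∑' n : {n : Fin h → ℕ+ // Antitone n}, (pyrWeight h n.1 : ℝ≥0∞) * F fun i => (n.1 i : ℕ) := by
  rw [← (Equiv.ofBijective _ (toChain_bijective h)).tsum_eq, ENNReal.tsum_sigma']
  refine tsum_congr fun n => ?_
  simp [chainLen_toChain, tsum_fintype, pyrWeight_eq]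

/-! ### Pyramids as pairs of chains -/

lemma mem_polySlice {P : Finset (ℕ × ℤ × ℤ)} {a : ℕ} {q : ℤ × ℤ} :
    q ∈ polySlice P a ↔ (a, q) ∈ P := by
  simp [polySlice]

lemma bounds_of_subset {a b c d a' b' c' d' : ℤ} (hab : a ≤ b) (hcd : c ≤ d)
    (hs : Finset.Icc a b ×ˢ Finset.Icc c d ⊆ Finset.Icc a' b' ×ˢ Finset.Icc c' d') :
    a' ≤ a ∧ b ≤ b' ∧ c' ≤ c ∧ d ≤ d' := by
  have h1 := @hs (a, c) (by simp [hab, hcd])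
  have h2 := @hs (b, d) (by simp [hab, hcd])
  simp only [Finset.mem_product, Finset.mem_Icc] at h1 h2
  exact ⟨h1.1.1, h2.1.2, h1.2.1, h2.2.2⟩

/-- The union of the boxes `{i} × [a_i, b_i] × [c_i, d_i]` spanned by two chains. -/
noncomputable def boxes {h : ℕ} (p : IChain h × IChain h) : Finset (ℕ × ℤ × ℤ) :=
  Finset.univ.biUnion fun i : Fin h =>
    {(i : ℕ)} ×ˢ (Finset.Icc (p.1.1.1 i) (p.1.1.2 i) ×ˢ Finset.Icc (p.2.1.1 i) (p.2.1.2 i))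

lemma mem_boxes {h : ℕ} {p : IChain h × IChain h} {t : ℕ} {q : ℤ × ℤ} :
    (t, q) ∈ boxes p ↔ ∃ ht : t < h,
      q ∈ Finset.Icc (p.1.1.1 ⟨t, ht⟩) (p.1.1.2 ⟨t, ht⟩) ×ˢ
        Finset.Icc (p.2.1.1 ⟨t, ht⟩) (p.2.1.2 ⟨t, ht⟩) := by
  simp only [boxes, Finset.mem_biUnion, Finset.mem_univ, true_and, Finset.mem_product,
    Finset.mem_singleton]
  constructor
  · rintro ⟨i, rfl, hq⟩
    exact ⟨i.2, hq⟩
  · rintro ⟨ht, hq⟩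
    exact ⟨⟨t, ht⟩, rfl, hq⟩

lemma polySlice_boxes {h : ℕ} (p : IChain h × IChain h) (i : Fin h) :
    polySlice (boxes p) i =
      Finset.Icc (p.1.1.1 i) (p.1.1.2 i) ×ˢ Finset.Icc (p.2.1.1 i) (p.2.1.2 i) := by
  ext q
  rw [mem_polySlice, mem_boxes]
  exact ⟨fun ⟨_, hq⟩ => hq, fun hq => ⟨i.2, hq⟩⟩

lemma isPyramid_boxes {h : ℕ} (hh : 1 ≤ h) (p : IChain h × IChain h) : IsPyramid h (boxes p) := by
  obtain ⟨⟨⟨a, b⟩, hab, hma, hmb, ha0⟩, ⟨⟨c, d⟩, hcd, hmc, hmd, hc0⟩⟩ := p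
  dsimp only at hab hma hmb ha0 hcd hmc hmd hc0
  refine ⟨fun t => ⟨?_, fun ht => ?_⟩, fun t ht => ?_, fun t u v ht => ?_, fun u v ht => ?_, ?_⟩
  · rintro ⟨q, hq⟩
    rw [mem_polySlice, mem_boxes] at hq
    exact hq.1
  · refine ⟨(a ⟨t, ht⟩, c ⟨t, ht⟩), ?_⟩
    rw [mem_polySlice, mem_boxes]
    exact ⟨ht, by simp [hab, hcd]⟩
  · exact ⟨_, _, _, _, hab ⟨t, ht⟩, hcd ⟨t, ht⟩, polySlice_boxes _ ⟨t, ht⟩⟩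
  · rw [mem_boxes] at ht ⊢
    obtain ⟨ht, hq⟩ := ht
    have hle : (⟨t, by omega⟩ : Fin h) ≤ ⟨t + 1, ht⟩ := by simp [Fin.le_def]
    have h1 := hma hle
    have h2 := hmb hle
    have h3 := hmc hle
    have h4 := hmd hle
    refine ⟨by omega, ?_⟩
    simp only [Finset.mem_product, Finset.mem_Icc] at hq ⊢
    omega
  · rw [mem_boxes] at ht
    obtain ⟨ht, hq⟩ := ht
    have h1 := ha0 ⟨0, ht⟩ rfl
    have h2 := hc0 ⟨0, ht⟩ rfl
    simp only [Finset.mem_product, Finset.mem_Icc] at hq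
    omega
  · rw [mem_boxes]
    have h1 := ha0 ⟨0, hh⟩ rfl
    have h2 := hc0 ⟨0, hh⟩ rfl
    have h3 := hab ⟨0, hh⟩
    have h4 := hcd ⟨0, hh⟩
    refine ⟨hh, ?_⟩
    simp only [Finset.mem_product, Finset.mem_Icc]
    omega

lemma boxes_bijective {h : ℕ} (hh : 1 ≤ h) :
    Function.Bijective fun p : IChain h × IChain h =>
      (⟨boxes p, isPyramid_boxes hh p⟩ : {P : Finset (ℕ × ℤ × ℤ) // IsPyramid h P}) := by
  constructor
  · intro p p' hp
    have hb : boxes p = boxes p' := congrArg Subtype.val hp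
    have key : ∀ i, (p.1.1.1 i = p'.1.1.1 i ∧ p.1.1.2 i = p'.1.1.2 i) ∧
        (p.2.1.1 i = p'.2.1.1 i ∧ p.2.1.2 i = p'.2.1.2 i) := fun i => by
      have hs : polySlice (boxes p) i = polySlice (boxes p') i := by rw [hb]
      rw [polySlice_boxes, polySlice_boxes] at hs
      have h1 := bounds_of_subset (p.1.2.1 i) (p.2.2.1 i) hs.subset
      have h2 := bounds_of_subset (p'.1.2.1 i) (p'.2.2.1 i) hs.symm.subset
      omega
    refine Prod.ext (Subtype.ext (Prod.ext ?_ ?_)) (Subtype.ext (Prod.ext ?_ ?_)) <;> funext i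
    exacts [(key i).1.1, (key i).1.2, (key i).2.1, (key i).2.2]
  · rintro ⟨P, hP1, hP2, hP3, hP4, hP5⟩
    choose a b c d hab hcd hS using fun i : Fin h => hP2 i i.2
    have hstep : ∀ (i : Fin h) (hi : (i : ℕ) + 1 < h),
        a i ≤ a ⟨i + 1, hi⟩ ∧ b ⟨i + 1, hi⟩ ≤ b i ∧ c i ≤ c ⟨i + 1, hi⟩ ∧ d ⟨i + 1, hi⟩ ≤ d i := by
      intro i hi
      apply bounds_of_subset (hab _) (hcd _)
      rw [← hS, ← hS]
      rintro ⟨u, v⟩ hq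
      rw [mem_polySlice] at hq ⊢
      exact hP3 _ _ _ hq
    have hzero : ∀ i : Fin h, (i : ℕ) = 0 → a i = 0 ∧ c i = 0 := by
      intro i hi
      have h1 : ((0 : ℤ), (0 : ℤ)) ∈ polySlice P i := by rw [mem_polySlice, hi]; exact hP5
      have h2 : (a i, c i) ∈ polySlice P i := by rw [hS]; simp [hab, hcd]
      rw [hS] at h1
      rw [mem_polySlice, hi] at h2
      have h3 := hP4 _ _ h2
      simp only [Finset.mem_product, Finset.mem_Icc] at h1
      omega
    have hma : Monotone a := antitone_toDual_comp_iff.1 (antitone_of_step fun i hi => (hstep i hi).1)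
    have hmc : Monotone c :=
      antitone_toDual_comp_iff.1 (antitone_of_step fun i hi => (hstep i hi).2.2.1)
    refine ⟨(⟨(a, b), hab, hma, antitone_of_step fun i hi => (hstep i hi).2.1,
      fun i hi => (hzero i hi).1⟩, ⟨(c, d), hcd, hmc,
        antitone_of_step fun i hi => (hstep i hi).2.2.2, fun i hi => (hzero i hi).2⟩),
      Subtype.ext ?_⟩
    ext ⟨t, q⟩
    dsimp only
    rw [mem_boxes, ← mem_polySlice]
    constructor
    · rintro ⟨ht, hq⟩
      exact (hS ⟨t, ht⟩).symm ▸ hq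
    · intro hq
      have ht : t < h := (hP1 t).1 ⟨q, hq⟩
      exact ⟨ht, (hS ⟨t, ht⟩) ▸ hq⟩

lemma card_polySlice_boxes {h : ℕ} (p : IChain h × IChain h) (i : Fin h) :
    (polySlice (boxes p) i).card = chainLen p.1 i * chainLen p.2 i := by
  rw [polySlice_boxes, Finset.card_product, Int.card_Icc, Int.card_Icc]
  rfl

/-- The identity in `ℝ≥0∞`, where no convergence is needed. -/
lemma tsum_pyramid {h : ℕ} (hh : 1 ≤ h) (y : Fin h → ℝ≥0∞) :
    ∑' P : {P : Finset (ℕ × ℤ × ℤ) // IsPyramid h P},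
        ∏ i : Fin h, y i ^ (polySlice P.1 (i : ℕ)).card =
      ∑' n : {n : Fin h → ℕ+ // Antitone n},
        (pyrWeight h n.1 : ℝ≥0∞) * ((∏ i, y i ^ (n.1 i : ℕ)) *
          ∏ i : Fin h, ((1 - ∏ j ∈ Finset.Iic i, y j ^ (n.1 j : ℕ)) ^
            (if (i : ℕ) + 1 < h then 2 else 1))⁻¹) := by
  rw [← (Equiv.ofBijective _ (boxes_bijective hh)).tsum_eq]
  simp only [Equiv.ofBijective_apply, card_polySlice_boxes]
  rw [ENNReal.tsum_prod', tsum_chain h (fun l => ∑' c' : IChain h, ∏ i, y i ^ (l i * chainLen c' i))]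
  refine tsum_congr fun n => ?_
  congr 1
  rw [tsum_chain h (fun l => ∏ i, y i ^ ((n.1 i : ℕ) * l i)), ← tsum_weight]
  simp only [pow_mul]

/-! ### Convergence -/

lemma prod_Iic_lt_one {h : ℕ} {y : Fin h → ℝ≥0∞} (hy : ∀ i, y i < 1) (i : Fin h) :
    ∏ j ∈ Finset.Iic i, y j < 1 := by
  rw [← Finset.mul_prod_erase _ _ (Finset.mem_Iic.2 le_rfl : i ∈ Finset.Iic i)]
  calc _ ≤ y i * 1 := by
        gcongr
        exact Finset.prod_le_one' fun j _ => (hy j).le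
    _ < 1 := by simpa using hy i

lemma tsum_rhs_ne_top {h : ℕ} {y : Fin h → ℝ≥0∞} (hy : ∀ i, y i < 1) :
    ∑' n : {n : Fin h → ℕ+ // Antitone n},
        (pyrWeight h n.1 : ℝ≥0∞) * ((∏ i, y i ^ (n.1 i : ℕ)) *
          ∏ i : Fin h, ((1 - ∏ j ∈ Finset.Iic i, y j ^ (n.1 j : ℕ)) ^
            (if (i : ℕ) + 1 < h then 2 else 1))⁻¹) ≠ ∞ := by
  set D : ℝ≥0∞ := ∏ i : Fin h,
    ((1 - ∏ j ∈ Finset.Iic i, y j) ^ (if (i : ℕ) + 1 < h then 2 else 1))⁻¹ with hD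
  have hDtop : D ≠ ∞ := ENNReal.prod_ne_top fun i _ =>
    ENNReal.inv_ne_top.2 (pow_ne_zero _ (tsub_pos_of_lt (prod_Iic_lt_one hy i)).ne')
  have hbound : ∑' n : {n : Fin h → ℕ+ // Antitone n},
        (pyrWeight h n.1 : ℝ≥0∞) * ((∏ i, y i ^ (n.1 i : ℕ)) *
          ∏ i : Fin h, ((1 - ∏ j ∈ Finset.Iic i, y j ^ (n.1 j : ℕ)) ^
            (if (i : ℕ) + 1 < h then 2 else 1))⁻¹) ≤ (∏ i, y i) * D * D := by
    rw [hD, ← tsum_weight, ← ENNReal.tsum_mul_right]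
    refine ENNReal.tsum_le_tsum fun n => ?_
    rw [← mul_assoc]
    gcongr with i _ j _
    exact pow_le_of_le_one (zero_le) (hy j).le (n.1 j).ne_zero
  refine ne_top_of_le_ne_top (ENNReal.mul_ne_top (ENNReal.mul_ne_top ?_ hDtop) hDtop) hbound
  exact ENNReal.prod_ne_top fun i _ => (hy i).ne_top

theorem genfun_pyramids (h : ℕ) (hh : 1 ≤ h) (x : Fin h → ℝ)
    (hx0 : ∀ i, 0 < x i) (hx1 : ∀ i, x i < 1) :
    (Summable fun P : {P : Finset (ℕ × ℤ × ℤ) // IsPyramid h P} =>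
      ∏ i : Fin h, x i ^ (polySlice P.1 (i : ℕ)).card) ∧
    (Summable fun n : {n : Fin h → ℕ+ // Antitone n} =>
      (pyrWeight h n.1 : ℝ) * (∏ i : Fin h, x i ^ ((n.1 i : ℕ))) /
        ∏ i : Fin h,
          (1 - ∏ j ∈ Finset.Iic i, x j ^ ((n.1 j : ℕ))) ^ (if (i : ℕ) + 1 < h then 2 else 1)) ∧
    (∑' P : {P : Finset (ℕ × ℤ × ℤ) // IsPyramid h P},
        ∏ i : Fin h, x i ^ (polySlice P.1 (i : ℕ)).card) =
      ∑' n : {n : Fin h → ℕ+ // Antitone n},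
        (pyrWeight h n.1 : ℝ) * (∏ i : Fin h, x i ^ ((n.1 i : ℕ))) /
          ∏ i : Fin h,
            (1 - ∏ j ∈ Finset.Iic i, x j ^ ((n.1 j : ℕ))) ^ (if (i : ℕ) + 1 < h then 2 else 1) := by
  set y : Fin h → ℝ≥0∞ := fun i => ENNReal.ofReal (x i) with hy
  have hyx : ∀ i, (y i).toReal = x i := fun i => ENNReal.toReal_ofReal (hx0 i).le
  have hy1 : ∀ i, y i < 1 := fun i => by
    rw [hy, ENNReal.ofReal_lt_one]; exact hx1 i
  have hL : ∀ P : {P : Finset (ℕ × ℤ × ℤ) // IsPyramid h P},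
      ∏ i : Fin h, x i ^ (polySlice P.1 (i : ℕ)).card =
        (∏ i : Fin h, y i ^ (polySlice P.1 (i : ℕ)).card).toReal := fun P => by
    simp only [ENNReal.toReal_prod, ENNReal.toReal_pow, hyx]
  have hR : ∀ n : {n : Fin h → ℕ+ // Antitone n},
      (pyrWeight h n.1 : ℝ) * (∏ i : Fin h, x i ^ ((n.1 i : ℕ))) /
        ∏ i : Fin h,
          (1 - ∏ j ∈ Finset.Iic i, x j ^ ((n.1 j : ℕ))) ^ (if (i : ℕ) + 1 < h then 2 else 1) =
      ((pyrWeight h n.1 : ℝ≥0∞) * ((∏ i, y i ^ (n.1 i : ℕ)) *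
          ∏ i : Fin h, ((1 - ∏ j ∈ Finset.Iic i, y j ^ (n.1 j : ℕ)) ^
            (if (i : ℕ) + 1 < h then 2 else 1))⁻¹)).toReal := fun n => by
    have hsub : ∀ i : Fin h, (1 - ∏ j ∈ Finset.Iic i, y j ^ (n.1 j : ℕ)).toReal =
        1 - ∏ j ∈ Finset.Iic i, x j ^ (n.1 j : ℕ) := fun i => by
      have hle : ∏ j ∈ Finset.Iic i, y j ^ (n.1 j : ℕ) ≤ 1 :=
        (prod_Iic_lt_one (fun j => pow_lt_one₀ (zero_le) (hy1 j) (n.1 j).ne_zero) i).le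
      rw [ENNReal.toReal_sub_of_le hle ENNReal.one_ne_top]
      simp only [ENNReal.toReal_prod, ENNReal.toReal_pow, hyx, ENNReal.toReal_one]
    simp only [ENNReal.toReal_mul, ENNReal.toReal_prod, ENNReal.toReal_inv, ENNReal.toReal_pow,
      hyx, hsub, ENNReal.toReal_natCast, Finset.prod_inv_distrib]
    rw [div_eq_mul_inv, mul_assoc]
  simp only [hL, hR]
  have hRtop := tsum_rhs_ne_top hy1
  have hLtop := hRtop
  rw [← tsum_pyramid hh y] at hLtop
  refine ⟨ENNReal.summable_toReal hLtop, ENNReal.summable_toReal hRtop, ?_⟩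
  rw [← ENNReal.tsum_toReal_eq (ENNReal.ne_top_of_tsum_ne_top hLtop),
    ← ENNReal.tsum_toReal_eq (ENNReal.ne_top_of_tsum_ne_top hRtop), tsum_pyramid hh y]
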